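/- arXiv:1401.5846 — 9 statements merged into one kernel-verified Lean document; each statement's English description precedes it below -/
import Mathlib

section
/- A diamond-free trimodal formula φ in negation normal form is D2⊕⊆K-satisfiable if and only if there exist a model M = (W, R_1, R_2, R_3, V) over a frame for D2⊕⊆K in which R_1 and R_2 are graphs of total functions on W (every world has exactly one R_1-successor and exactly one R_2-successor) and a world w ∈ W with M, w ⊨ φ. -/
/-!
Truth of a diamond-free formula at a world only depends on its accessibility relations through
universally quantified conditions, so it survives removing edges (`Sat.anti_of_diamondFree`).
Given a model over a `D2⊕⊆K` frame, seriality lets one choose a single `R 0`-successor `f w` and a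
single `R 1`-successor `g w` of every world; keeping only these edges in `R 0` and `R 1`, and all
of `R 2`, yields a model over a `D2⊕⊆K` frame with functional `R 0`, `R 1` that still satisfies
the formula. The converse is immediate.
-/

/-- Multimodal formulas in negation normal form over modality index type `I`
and propositional-variable type `P`. -/
inductive MF (I : Type) (P : Type) : Type where
  | var  : P → MF I P
  | nvar : P → MF I P
  | bot  : MF I P
  | top  : MF I P
  | and  : MF I P → MF I P → MF I P
  | or   : MF I P → MF I P → MF I P
  | box  : I → MF I P → MF I P
  | dia  : I → MF I P → MF I P

/-- Truth of a formula at a world of a Kripke model `(W, R, V)`. -/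
def Sat {I P W : Type} (R : I → W → W → Prop) (V : P → Set W) : W → MF I P → Prop
  | w, .var p  => w ∈ V p
  | w, .nvar p => w ∉ V p
  | _, .bot    => False
  | _, .top    => True
  | w, .and φ ψ => Sat R V w φ ∧ Sat R V w ψ
  | w, .or φ ψ  => Sat R V w φ ∨ Sat R V w ψ
  | w, .box i φ => ∀ v, R i w v → Sat R V v φ
  | w, .dia i φ => ∃ v, R i w v ∧ Sat R V v φ

/-- A formula is diamond-free if it contains no diamond operators. -/
def DiamondFree {I P : Type} : MF I P → Prop
  | .var _ | .nvar _ | .bot | .top => True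
  | .and φ ψ | .or φ ψ => DiamondFree φ ∧ DiamondFree ψ
  | .box _ φ => DiamondFree φ
  | .dia _ _ => False

/-- A relation is serial if every point has a successor. -/
def Serial {W : Type} (R : W → W → Prop) : Prop := ∀ w, ∃ v, R w v

/-- `D2⊕⊆K`-satisfiability: satisfiable in a trimodal model where `R 0`, `R 1`
are serial and `R 0 ∪ R 1 ⊆ R 2`. -/
def D2KSat (φ : MF (Fin 3) ℕ) : Prop :=
  ∃ (W : Type) (R : Fin 3 → W → W → Prop) (V : ℕ → Set W) (w : W),
    Serial (R 0) ∧ Serial (R 1) ∧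
    (∀ a b, R 0 a b ∨ R 1 a b → R 2 a b) ∧
    Sat R V w φ

/-- Removing edges from the accessibility relations preserves the truth of diamond-free
formulas. -/
theorem Sat.anti_of_diamondFree {I P W : Type} {R R' : I → W → W → Prop} {V : P → Set W}
    (hR : ∀ i a b, R' i a b → R i a b) (φ : MF I P) (hdf : DiamondFree φ) (w : W)
    (h : Sat R V w φ) : Sat R' V w φ := by
  induction φ generalizing w with
  | var p => exact h
  | nvar p => exact h
  | bot => exact h
  | top => trivial
  | and φ ψ ihφ ihψ => exact ⟨ihφ hdf.1 w h.1, ihψ hdf.2 w h.2⟩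
  | or φ ψ ihφ ihψ => exact Or.imp (ihφ hdf.1 w) (ihψ hdf.2 w) h
  | box i φ ih => exact fun v hv => ih hdf v (h v (hR i w v hv))
  | dia i φ _ => exact hdf.elim

/-- A diamond-free trimodal NNF formula is D2⊕⊆K-satisfiable iff it
is satisfiable in a model over a D2⊕⊆K frame in which `R 0` and `R 1` are graphs
of total functions (every world has exactly one `R 0`- and one `R 1`-successor). -/
theorem stmt_1 (φ : MF (Fin 3) ℕ) (hdf : DiamondFree φ) :
    D2KSat φ ↔
      ∃ (W : Type) (R : Fin 3 → W → W → Prop) (V : ℕ → Set W) (w : W),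
        (∀ a, ∃! b, R 0 a b) ∧ (∀ a, ∃! b, R 1 a b) ∧
        Serial (R 0) ∧ Serial (R 1) ∧
        (∀ a b, R 0 a b ∨ R 1 a b → R 2 a b) ∧
        Sat R V w φ := by
  constructor
  · rintro ⟨W, R, V, w, h0, h1, h2, h⟩
    choose f hf using h0
    choose g hg using h1
    refine ⟨W, ![fun a b => b = f a, fun a b => b = g a, R 2], V, w,
      fun a => ⟨f a, rfl, fun _ hb => hb⟩, fun a => ⟨g a, rfl, fun _ hb => hb⟩,
      fun a => ⟨f a, rfl⟩, fun a => ⟨g a, rfl⟩, ?_, ?_⟩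
    · rintro a b (rfl | rfl)
      · exact h2 _ _ (Or.inl (hf a))
      · exact h2 _ _ (Or.inr (hg a))
    · refine Sat.anti_of_diamondFree (R := R) (fun i a b hab => ?_) φ hdf w h
      fin_cases i
      · obtain rfl : b = f a := hab
        exact hf a
      · obtain rfl : b = g a := hab
        exact hg a
      · exact hab
  · rintro ⟨W, R, V, w, -, -, h0, h1, h2, h⟩
    exact ⟨W, R, V, w, h0, h1, h2, h⟩
end

section
/- Let W be a nonempty set, let R ⊆ W × W be serial and transitive, let M = (W, R, V) be a unimodal Kripke model, let S be a finite set of unimodal formulas, and let b ∈ W. Then there exists c ∈ W with b R c such that for every formula ψ ∈ S, if M, c ⊨ □ψ then M, c ⊨ ψ. -/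
/-- The version of the result suited to induction on `S`: the implications `□ψ → ψ` are required
at all successors of `c` too, so that they survive moving on to a successor for the next formula. -/
theorem exists_cone_box_imp {P W : Type} (R : W → W → Prop) (V : P → Set W)
    (hser : Serial R) (htrans : Transitive R)
    (S : Set (MF Unit P)) (hS : S.Finite) (b : W) :
    ∃ c, R b c ∧ ∀ d, (d = c ∨ R c d) → ∀ ψ ∈ S,
      Sat (fun _ => R) V d (MF.box () ψ) → Sat (fun _ => R) V d ψ := by
  induction S, hS using Set.Finite.induction_on with
  | empty =>
    obtain ⟨c, hc⟩ := hser b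
    exact ⟨c, hc, fun _ _ ψ hψ => absurd hψ (Set.notMem_empty ψ)⟩
  | @insert φ S _ _ ih =>
    obtain ⟨c, hbc, hc⟩ := ih
    by_cases h : ∃ d, R c d ∧ Sat (fun _ => R) V d (MF.box () φ)
    · obtain ⟨d, hcd, hd⟩ := h
      obtain ⟨e, hde⟩ := hser d
      refine ⟨e, htrans hbc (htrans hcd hde), ?_⟩
      intro x hx ψ hψ hbox
      have hdx : R d x := by
        rcases hx with rfl | hx
        · exact hde
        · exact htrans hde hx
      rcases hψ with rfl | hψ
      · exact hd x hdx
      · exact hc x (Or.inr (htrans hcd hdx)) ψ hψ hbox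
    · obtain ⟨d, hcd⟩ := hser c
      refine ⟨d, htrans hbc hcd, ?_⟩
      intro x hx ψ hψ hbox
      have hcx : R c x := by
        rcases hx with rfl | hx
        · exact hcd
        · exact htrans hcd hx
      rcases hψ with rfl | hψ
      · exact absurd ⟨x, hcx, hbox⟩ h
      · exact hc x (Or.inr hcx) ψ hψ hbox

/-- In a unimodal model with serial transitive accessibility
relation, from any world `b` one can reach a world `c` at which every boxed
formula from a given finite set `S` that is true has its body true as well. -/
theorem stmt_2 {P W : Type} (R : W → W → Prop) (V : P → Set W)
    (hser : Serial R) (htrans : Transitive R)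
    (S : Set (MF Unit P)) (hS : S.Finite) (b : W) :
    ∃ c, R b c ∧ ∀ ψ ∈ S,
      Sat (fun _ => R) V c (MF.box () ψ) → Sat (fun _ => R) V c ψ := by
  obtain ⟨c, hbc, hc⟩ := exists_cone_box_imp R V hser htrans S hS b
  exact ⟨c, hbc, hc c (Or.inl rfl)⟩
end

section
/- A diamond-free trimodal formula φ in negation normal form is D2⊕⊆K-satisfiable if and only if it is satisfiable in a model over a frame for D2⊕⊆K having at most 2^{md(φ)+1} worlds, where md(φ) is the modal depth of φ (the maximal nesting depth of the operators □_i in φ). -/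
/-- Modal depth: maximal nesting depth of modal operators. -/
def md {I P : Type} : MF I P → ℕ
  | .var _ | .nvar _ | .bot | .top => 0
  | .and φ ψ | .or φ ψ => max (md φ) (md ψ)
  | .box _ φ | .dia _ φ => md φ + 1

/-- The world of the original model represented by heap index `n`: follow, from the root `w`, the
binary digits of `n` after the leading one, with `s false` and `s true` choosing successors. -/
def heapWorld {W : Type} (s : Bool → W → W) (w : W) (n : ℕ) : W :=
  if n ≤ 1 then w else s (decide (n % 2 = 1)) (heapWorld s w (n / 2))
termination_by n

/-- The child of `a` on side `b` in the heap of size `N`; indices without such a child (the leaves)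
are their own child. -/
def heapChild {N : ℕ} (b : Bool) (a : Fin N) : Fin N :=
  if h : 2 * a.1 + b.toNat < N then ⟨2 * a.1 + b.toNat, h⟩ else a

/-- Accessibility on the heap: modalities `0` and `1` are the graphs of the two child functions,
and modality `2` is their union. -/
def heapRel {N : ℕ} (i : Fin 3) (a c : Fin N) : Prop :=
  (i ≠ 1 ∧ c = heapChild false a) ∨ (i ≠ 0 ∧ c = heapChild true a)

theorem heapWorld_child {W : Type} (s : Bool → W → W) (w : W) (n : ℕ) (hn : 1 ≤ n) (b : Bool) :
    heapWorld s w (2 * n + b.toNat) = s b (heapWorld s w n) := by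
  rw [heapWorld, if_neg (by omega)]
  cases b
  · have h1 : (2 * n + false.toNat) / 2 = n := by simp
    have h2 : ¬ (2 * n + false.toNat) % 2 = 1 := by simp
    rw [h1, decide_eq_false h2]
  · have h1 : (2 * n + true.toNat) / 2 = n := by simp; omega
    have h2 : (2 * n + true.toNat) % 2 = 1 := by simp
    rw [h1, decide_eq_true h2]

/-- A diamond-free formula true at the represented world is true at the heap index `n`, provided
the subtree below `n` is at least as deep as the formula. The inequality expresses the latter:
it bounds the last descendant of `n` at distance `md ψ`, namely `(n + 1) * 2 ^ md ψ - 1`. -/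
theorem sat_heap {W : Type} (R : Fin 3 → W → W → Prop) (V : ℕ → Set W) (w : W)
    (s : Bool → W → W) (h0 : ∀ a, R 0 a (s false a)) (h1 : ∀ a, R 1 a (s true a))
    (h2 : ∀ a b, R 0 a b ∨ R 1 a b → R 2 a b) (N : ℕ) (ψ : MF (Fin 3) ℕ) :
    DiamondFree ψ → ∀ n : Fin N, 1 ≤ n.1 → (n.1 + 1) * 2 ^ md ψ ≤ N →
      Sat R V (heapWorld s w n.1) ψ →
      Sat heapRel (fun p => {a : Fin N | heapWorld s w a.1 ∈ V p}) n ψ := by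
  induction ψ with
  | var p => intro _ n _ _ h; exact h
  | nvar p => intro _ n _ _ h; exact h
  | bot => intro _ n _ _ h; exact h
  | top => intro _ n _ _ h; exact h
  | and φ ψ ihφ ihψ =>
    intro hd n hn hN h
    have hφ : (n.1 + 1) * 2 ^ md φ ≤ N :=
      le_trans (Nat.mul_le_mul_left _ (Nat.pow_le_pow_right two_pos (le_max_left _ _))) hN
    have hψ : (n.1 + 1) * 2 ^ md ψ ≤ N :=
      le_trans (Nat.mul_le_mul_left _ (Nat.pow_le_pow_right two_pos (le_max_right _ _))) hN
    exact ⟨ihφ hd.1 n hn hφ h.1, ihψ hd.2 n hn hψ h.2⟩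
  | or φ ψ ihφ ihψ =>
    intro hd n hn hN h
    have hφ : (n.1 + 1) * 2 ^ md φ ≤ N :=
      le_trans (Nat.mul_le_mul_left _ (Nat.pow_le_pow_right two_pos (le_max_left _ _))) hN
    have hψ : (n.1 + 1) * 2 ^ md ψ ≤ N :=
      le_trans (Nat.mul_le_mul_left _ (Nat.pow_le_pow_right two_pos (le_max_right _ _))) hN
    exact h.imp (ihφ hd.1 n hn hφ) (ihψ hd.2 n hn hψ)
  | dia i φ ih => intro hd; exact hd.elim
  | box i φ ih =>
    intro hd n hn hN h
    have hN' : (2 * n.1 + 2) * 2 ^ md φ ≤ N := by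
      have e : (n.1 + 1) * 2 ^ (md φ + 1) = (2 * n.1 + 2) * 2 ^ md φ := by ring
      exact e ▸ hN
    have hpos : 1 ≤ 2 ^ md φ := Nat.one_le_two_pow
    have key : ∀ b : Bool, R i (heapWorld s w n.1) (s b (heapWorld s w n.1)) →
        Sat heapRel (fun p => {a : Fin N | heapWorld s w a.1 ∈ V p}) (heapChild b n) φ := by
      intro b hb
      have hb1 : b.toNat ≤ 1 := Bool.toNat_le b
      have hlt : 2 * n.1 + b.toNat < N := by
        have := Nat.le_mul_of_pos_right (2 * n.1 + 2) hpos
        omega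
      have hc : (heapChild b n).1 = 2 * n.1 + b.toNat := by simp [heapChild, hlt]
      refine ih hd _ (by omega) ?_ ?_
      · rw [hc]
        exact le_trans (Nat.mul_le_mul_right _ (by omega)) hN'
      · rw [hc, heapWorld_child s w _ hn]
        exact h _ hb
    rintro v (⟨hi, rfl⟩ | ⟨hi, rfl⟩)
    · apply key
      fin_cases i
      · exact h0 _
      · exact absurd rfl hi
      · exact h2 _ _ (Or.inl (h0 _))
    · apply key
      fin_cases i
      · exact absurd rfl hi
      · exact h1 _
      · exact h2 _ _ (Or.inr (h1 _))

/-- A diamond-free trimodal NNF formula is D2⊕⊆K-satisfiable iff it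
is satisfiable in a model over a D2⊕⊆K frame with at most `2 ^ (md φ + 1)` worlds. -/
theorem stmt_3 (φ : MF (Fin 3) ℕ) (hdf : DiamondFree φ) :
    D2KSat φ ↔
      ∃ (W : Type) (_ : Finite W), Nat.card W ≤ 2 ^ (md φ + 1) ∧
        ∃ (R : Fin 3 → W → W → Prop) (V : ℕ → Set W) (w : W),
          Serial (R 0) ∧ Serial (R 1) ∧
          (∀ a b, R 0 a b ∨ R 1 a b → R 2 a b) ∧
          Sat R V w φ := by
  constructor
  · rintro ⟨W, R, V, w, hs0, hs1, h2, hφ⟩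
    choose s0 hs0 using hs0
    choose s1 hs1 using hs1
    have hN : 1 < 2 ^ (md φ + 1) := Nat.one_lt_two_pow (Nat.succ_ne_zero _)
    refine ⟨Fin (2 ^ (md φ + 1)), inferInstance, by simp, heapRel, _, ⟨1, hN⟩, ?_, ?_, ?_,
      sat_heap R V w (fun b => bif b then s1 else s0) hs0 hs1 h2 _ φ hdf ⟨1, hN⟩ le_rfl ?_ ?_⟩
    · exact fun a => ⟨heapChild false a, Or.inl ⟨by decide, rfl⟩⟩
    · exact fun a => ⟨heapChild true a, Or.inr ⟨by decide, rfl⟩⟩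
    · rintro a b (⟨_, h⟩ | ⟨_, h⟩) <;> simp_all [heapRel]
    · exact le_of_eq (by ring)
    · rw [heapWorld, if_pos le_rfl]
      exact hφ
  · rintro ⟨W, _, _, R, V, w, h⟩
    exact ⟨W, R, V, w, h⟩
end

section
/- Let φ be a unimodal formula in negation normal form with subformulas θ_1, …, θ_k (k ≥ 2) enumerated in non-decreasing order of size (so θ_k = φ, and every subformula of θ_i appears before θ_i), let L = ⌈log₂ k⌉, and let q be a propositional variable not occurring in φ. For 1 ≤ x ≤ k let dseq(x) = □_{x_1+1}□_{x_2+1}⋯□_{x_L+1}, where x_1 x_2 ⋯ x_L is the L-bit binary representation of x. Define the trimodal formula i^{tr} by recursion on i: if θ_i is a literal, ⊥, or ⊤, then i^{tr} = θ_i; if θ_i = θ_j ∘ θ_l with ∘ ∈ {∧, ∨}, then i^{tr} = j^{tr} ∘ l^{tr}; if θ_i = □θ_j, then i^{tr} = □_3^{L}(j^{tr} ∨ ¬q); if θ_i = ◇θ_j, then i^{tr} = dseq(i)(j^{tr} ∧ q). Let φ^{tr} = k^{tr} ∧ q. Then φ^{tr} is diamond-free, and φ is K-satisfiable if and only if φ^{tr}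 is D2⊕⊆K-satisfiable. -/
/-- The set of subformulas of a formula. -/
def Subf {I P : Type} : MF I P → Set (MF I P)
  | .var p  => {.var p}
  | .nvar p => {.nvar p}
  | .bot    => {.bot}
  | .top    => {.top}
  | .and φ ψ => {MF.and φ ψ} ∪ Subf φ ∪ Subf ψ
  | .or φ ψ  => {MF.or φ ψ} ∪ Subf φ ∪ Subf ψ
  | .box i φ => {MF.box i φ} ∪ Subf φ
  | .dia i φ => {MF.dia i φ} ∪ Subf φ

/-- Size of a formula. -/
def fsize {I P : Type} : MF I P → ℕ
  | .var _ | .nvar _ | .bot | .top => 1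
  | .and φ ψ | .or φ ψ => fsize φ + fsize ψ + 1
  | .box _ φ | .dia _ φ => fsize φ + 1

/-- The propositional variables occurring (positively or negatively) in a formula. -/
def fvars {I P : Type} : MF I P → Set P
  | .var p | .nvar p => {p}
  | .bot | .top => ∅
  | .and φ ψ | .or φ ψ => fvars φ ∪ fvars ψ
  | .box _ φ | .dia _ φ => fvars φ

/-- `n` iterations of the box operator of modality `i`. -/
def iterBox {I P : Type} (i : I) : ℕ → MF I P → MF I P
  | 0, φ => φ
  | n + 1, φ => .box i (iterBox i n φ)

/-- `dseq x L ψ` prefixes `ψ` with the sequence of boxes `□_{x_1+1}⋯□_{x_L+1}`,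
where `x_1 ⋯ x_L` is the `L`-bit binary representation of `x`
(most significant bit outermost). -/
def dseq (x : ℕ) : ℕ → MF (Fin 3) ℕ → MF (Fin 3) ℕ
  | 0, ψ => ψ
  | L + 1, ψ => .box (if Nat.testBit x L then 1 else 0) (dseq x L ψ)

/-- `K`-satisfiability of a unimodal formula. -/
def KSat (φ : MF Unit ℕ) : Prop :=
  ∃ (W : Type) (R : W → W → Prop) (V : ℕ → Set W) (w : W),
    Sat (fun _ => R) V w φ

/-- `IsTr θ k L q ψ χ`: the trimodal formula `χ` translates the unimodal formula `ψ`, where the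
diamond formulas in `ψ` are numbered by their positions in `θ 1, …, θ k`. The variable `q` does not
occur in `ψ`. -/
inductive IsTr (θ : ℕ → MF Unit ℕ) (k L q : ℕ) : MF Unit ℕ → MF (Fin 3) ℕ → Prop
  | var (p : ℕ) : p ≠ q → IsTr θ k L q (.var p) (.var p)
  | nvar (p : ℕ) : p ≠ q → IsTr θ k L q (.nvar p) (.nvar p)
  | bot : IsTr θ k L q .bot .bot
  | top : IsTr θ k L q .top .top
  | and {ψ₁ ψ₂ : MF Unit ℕ} {χ₁ χ₂ : MF (Fin 3) ℕ} : IsTr θ k L q ψ₁ χ₁ → IsTr θ k L q ψ₂ χ₂ →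
      IsTr θ k L q (.and ψ₁ ψ₂) (.and χ₁ χ₂)
  | or {ψ₁ ψ₂ : MF Unit ℕ} {χ₁ χ₂ : MF (Fin 3) ℕ} : IsTr θ k L q ψ₁ χ₁ → IsTr θ k L q ψ₂ χ₂ →
      IsTr θ k L q (.or ψ₁ ψ₂) (.or χ₁ χ₂)
  | box {ψ : MF Unit ℕ} {χ : MF (Fin 3) ℕ} : IsTr θ k L q ψ χ →
      IsTr θ k L q (.box () ψ) (iterBox 2 L (.or χ (.nvar q)))
  | dia {ψ : MF Unit ℕ} {χ : MF (Fin 3) ℕ} (i : ℕ) : 1 ≤ i → i ≤ k → θ i = .dia () ψ →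
      IsTr θ k L q ψ χ → IsTr θ k L q (.dia () ψ) (dseq i L (.and χ (.var q)))

theorem diamondFree_iterBox {I P : Type} (i : I) (χ : MF I P) (h : DiamondFree χ) (n : ℕ) :
    DiamondFree (iterBox i n χ) := by
  induction n with
  | zero => exact h
  | succ n ih => exact ih

theorem diamondFree_dseq (x : ℕ) (χ : MF (Fin 3) ℕ) (h : DiamondFree χ) (n : ℕ) :
    DiamondFree (dseq x n χ) := by
  induction n with
  | zero => exact h
  | succ n ih => exact ih

theorem IsTr.diamondFree {θ : ℕ → MF Unit ℕ} {k L q : ℕ} {ψ : MF Unit ℕ} {χ : MF (Fin 3) ℕ}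
    (h : IsTr θ k L q ψ χ) : DiamondFree χ := by
  induction h with
  | var | nvar | bot | top => trivial
  | and _ _ ih₁ ih₂ | or _ _ ih₁ ih₂ => exact ⟨ih₁, ih₂⟩
  | box _ ih => exact diamondFree_iterBox _ (.or _ (.nvar _)) ⟨ih, trivial⟩ _
  | dia _ _ _ _ _ ih => exact diamondFree_dseq _ (.and _ (.var _)) ⟨ih, trivial⟩ _

/-! ### From a trimodal model to a unimodal model -/

/-- `StepN S n w v`: there is an `S`-path with exactly `n` steps from `w` to `v`. -/
def StepN {W : Type} (S : W → W → Prop) : ℕ → W → W → Prop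
  | 0, w, v => w = v
  | n + 1, w, v => ∃ u, S w u ∧ StepN S n u v

theorem sat_of_iterBox {W : Type} {R : Fin 3 → W → W → Prop} {V : ℕ → Set W}
    {χ : MF (Fin 3) ℕ} {v : W} (n : ℕ) (w : W) (h : Sat R V w (iterBox 2 n χ))
    (hs : StepN (R 2) n w v) : Sat R V v χ := by
  induction n generalizing w with
  | zero => cases hs; exact h
  | succ n ih =>
    obtain ⟨u, hu, hs⟩ := hs
    exact ih u (h u hu) hs

theorem exists_of_dseq {W : Type} {R : Fin 3 → W → W → Prop} {V : ℕ → Set W}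
    (h0 : Serial (R 0)) (h1 : Serial (R 1)) (hsub : ∀ a b, R 0 a b ∨ R 1 a b → R 2 a b)
    {χ : MF (Fin 3) ℕ} (x n : ℕ) (w : W) (h : Sat R V w (dseq x n χ)) :
    ∃ v, StepN (R 2) n w v ∧ Sat R V v χ := by
  induction n generalizing w with
  | zero => exact ⟨w, rfl, h⟩
  | succ n ih =>
    have key : ∃ u, R 2 w u ∧ Sat R V u (dseq x n χ) := by
      unfold dseq at h
      split at h
      · obtain ⟨u, hu⟩ := h1 w
        exact ⟨u, hsub _ _ (Or.inr hu), h u hu⟩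
      · obtain ⟨u, hu⟩ := h0 w
        exact ⟨u, hsub _ _ (Or.inl hu), h u hu⟩
    obtain ⟨u, hu, hsat⟩ := key
    obtain ⟨v, hv, hsat⟩ := ih u hsat
    exact ⟨v, ⟨u, hu, hv⟩, hsat⟩

theorem IsTr.sat_back {θ : ℕ → MF Unit ℕ} {k L q : ℕ} {ψ : MF Unit ℕ} {χ : MF (Fin 3) ℕ}
    (h : IsTr θ k L q ψ χ) {W : Type} {R : Fin 3 → W → W → Prop} {V : ℕ → Set W}
    (h0 : Serial (R 0)) (h1 : Serial (R 1)) (hsub : ∀ a b, R 0 a b ∨ R 1 a b → R 2 a b)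
    (w : W) (hw : Sat R V w χ) :
    Sat (fun _ : Unit => fun w v => StepN (R 2) L w v ∧ v ∈ V q) V w ψ := by
  induction h generalizing w with
  | var | nvar | bot | top => exact hw
  | and _ _ ih₁ ih₂ => exact ⟨ih₁ w hw.1, ih₂ w hw.2⟩
  | or _ _ ih₁ ih₂ => exact hw.imp (ih₁ w) (ih₂ w)
  | box _ ih =>
    rintro v ⟨hv, hvq⟩
    rcases sat_of_iterBox L w hw hv with h | h
    · exact ih v h
    · exact absurd hvq h
  | dia i _ _ _ _ ih =>
    obtain ⟨v, hv, hsat⟩ := exists_of_dseq h0 h1 hsub i L w hw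
    exact ⟨v, ⟨hv, hsat.2⟩, ih v hsat.1⟩

/-! ### From a unimodal model to a trimodal model -/

/-- Worlds of the unravelled model. `none` is the sink world; `some (w, n, f)` is a node of the
binary tree below `w`, still `n` steps away from the leaves, reached by choosing the bits `f m` at
the positions `n ≤ m < L`. The nodes with `n = L` represent the original worlds. -/
abbrev UWorld (W : Type) : Type := Option (W × ℕ × (ℕ → Bool))

/-- `Witness θ k L R V w f v`: the successor `v` of `w` witnesses a diamond formula `θ i` whose index
has the `L`-bit code `f`. -/
def Witness (θ : ℕ → MF Unit ℕ) (k L : ℕ) {W : Type} (R : W → W → Prop) (V : ℕ → Set W)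
    (w : W) (f : ℕ → Bool) (v : W) : Prop :=
  ∃ i ψ, 1 ≤ i ∧ i ≤ k ∧ (∀ m < L, f m = i.testBit m) ∧ θ i = .dia () ψ ∧ R w v ∧
    Sat (fun _ => R) V v ψ

open Classical in
/-- The leaf of the tree below `w` with address `f`: a chosen witness if there is one, the sink
world otherwise. -/
noncomputable def leaf (θ : ℕ → MF Unit ℕ) (k L : ℕ) {W : Type} (R : W → W → Prop)
    (V : ℕ → Set W) (w : W) (f : ℕ → Bool) : UWorld W :=
  if h : ∃ v, Witness θ k L R V w f v then some (h.choose, L, f) else none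

/-- The successor along bit `b` in the unravelled model. -/
noncomputable def ustep (θ : ℕ → MF Unit ℕ) (k L : ℕ) {W : Type} (R : W → W → Prop)
    (V : ℕ → Set W) (b : Bool) : UWorld W → UWorld W
  | none => none
  | some (_, 0, _) => none
  | some (w, 1, f) => leaf θ k L R V w (Function.update f 0 b)
  | some (w, n + 2, f) => some (w, n + 1, Function.update f (n + 1) b)

/-- The relations of the unravelled model: the graphs of the two bit successor functions, and
their union. -/
def URel (θ : ℕ → MF Unit ℕ) (k L : ℕ) {W : Type} (R : W → W → Prop)
    (V : ℕ → Set W) (j : Fin 3) (a b : UWorld W) : Prop :=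
  (j ≠ 1 ∧ b = ustep θ k L R V false a) ∨ (j ≠ 0 ∧ b = ustep θ k L R V true a)

/-- The valuation of the unravelled model: `q` marks the original worlds, and every other variable
is inherited from the root of the tree. -/
def UVal (L q : ℕ) {W : Type} (V : ℕ → Set W) (p : ℕ) : Set (UWorld W) :=
  {a | ∃ w n f, a = some (w, n, f) ∧ ((p = q ∧ n = L) ∨ (p ≠ q ∧ w ∈ V p))}

theorem sat_iterBox_tree {θ : ℕ → MF Unit ℕ} {k L q : ℕ} {W : Type} {R : W → W → Prop}
    {V : ℕ → Set W} {χ : MF (Fin 3) ℕ} (w : W)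
    (hnone : Sat (URel θ k L R V) (UVal L q V) none χ)
    (hsome : ∀ v f, R w v → Sat (URel θ k L R V) (UVal L q V) (some (v, L, f)) χ)
    (n : ℕ) (f : ℕ → Bool) :
    Sat (URel θ k L R V) (UVal L q V) (some (w, n + 1, f)) (iterBox 2 (n + 1) χ) := by
  induction n generalizing f with
  | zero =>
    have key : ∀ g, Sat (URel θ k L R V) (UVal L q V) (leaf θ k L R V w g) χ := by
      intro g
      unfold leaf
      split
      · rename_i h
        obtain ⟨i, ψ, _, _, _, _, hR, _⟩ := h.choose_spec
        exact hsome _ _ hR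
      · exact hnone
    rintro v (⟨_, rfl⟩ | ⟨_, rfl⟩)
    · exact key _
    · exact key _
  | succ n ih =>
    rintro v (⟨_, rfl⟩ | ⟨_, rfl⟩)
    · exact ih _
    · exact ih _

/-- Along the path spelled by `x`, the leaf reached has address `x`. -/
theorem sat_dseq_tree {θ : ℕ → MF Unit ℕ} {k L q : ℕ} {W : Type} {R : W → W → Prop}
    {V : ℕ → Set W} {χ : MF (Fin 3) ℕ} (w : W) (x : ℕ)
    (hleaf : ∀ f : ℕ → Bool, (∀ m < L, f m = x.testBit m) →
      Sat (URel θ k L R V) (UVal L q V) (leaf θ k L R V w f) χ)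
    (n : ℕ) (f : ℕ → Bool) (hf : ∀ m, n + 1 ≤ m → m < L → f m = x.testBit m) :
    Sat (URel θ k L R V) (UVal L q V) (some (w, n + 1, f)) (dseq x (n + 1) χ) := by
  have hstep : ∀ (n : ℕ) (a v : UWorld W),
      URel θ k L R V (if x.testBit n then 1 else 0) a v →
        v = ustep θ k L R V (x.testBit n) a := by
    intro n a v h
    cases hb : x.testBit n <;> simpa [hb, URel] using h
  have hupd : ∀ (n : ℕ) (f : ℕ → Bool), (∀ m, n + 1 ≤ m → m < L → f m = x.testBit m) →
      ∀ m, n ≤ m → m < L → Function.update f n (x.testBit n) m = x.testBit m := by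
    intro n f hf m hm hmL
    rcases eq_or_lt_of_le hm with rfl | hlt
    · simp
    · rw [Function.update_of_ne hlt.ne']
      exact hf m hlt hmL
  induction n generalizing f with
  | zero =>
    intro v hv
    rw [hstep 0 _ v hv]
    exact hleaf _ fun m hm => hupd 0 f hf m (Nat.zero_le m) hm
  | succ n ih =>
    intro v hv
    rw [hstep (n + 1) _ v hv]
    exact ih _ (hupd (n + 1) f hf)

/-- Distinct indices in `1, …, k` have distinct `L`-bit codes. This includes `i = k = 2 ^ L`,
whose code is all zeros: the index `0` is not used. -/
theorem index_eq_of_code {k L i j : ℕ} (hkL : k ≤ 2 ^ L) (hi : 1 ≤ i) (hik : i ≤ k) (hj : 1 ≤ j)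
    (hjk : j ≤ k) (h : ∀ m < L, i.testBit m = j.testBit m) : i = j := by
  have hmod : i % 2 ^ L = j % 2 ^ L := by
    apply Nat.eq_of_testBit_eq
    intro m
    rw [Nat.testBit_mod_two_pow, Nat.testBit_mod_two_pow]
    by_cases hm : m < L
    · rw [h m hm]
    · simp [hm]
  rcases Nat.lt_or_ge i (2 ^ L) with h1 | h1 <;> rcases Nat.lt_or_ge j (2 ^ L) with h2 | h2
  · rwa [Nat.mod_eq_of_lt h1, Nat.mod_eq_of_lt h2] at hmod
  · have : j = 2 ^ L := by omega
    rw [Nat.mod_eq_of_lt h1, this, Nat.mod_self] at hmod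
    omega
  · have : i = 2 ^ L := by omega
    rw [Nat.mod_eq_of_lt h2, this, Nat.mod_self] at hmod
    omega
  · omega

theorem IsTr.sat_forth {θ : ℕ → MF Unit ℕ} {k L q : ℕ} {ψ : MF Unit ℕ} {χ : MF (Fin 3) ℕ}
    (h : IsTr θ k L q ψ χ) (hL : 1 ≤ L) (hkL : k ≤ 2 ^ L) {W : Type} {R : W → W → Prop}
    {V : ℕ → Set W} (w : W) (f : ℕ → Bool) (hw : Sat (fun _ => R) V w ψ) :
    Sat (URel θ k L R V) (UVal L q V) (some (w, L, f)) χ := by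
  induction h generalizing w f with
  | var p hp => exact ⟨w, L, f, rfl, Or.inr ⟨hp, hw⟩⟩
  | nvar p hp =>
    rintro ⟨w', n, g, heq, ⟨h, _⟩ | ⟨_, h⟩⟩
    · exact hp h
    · cases heq
      exact hw h
  | bot | top => exact hw
  | and _ _ ih₁ ih₂ => exact ⟨ih₁ w f hw.1, ih₂ w f hw.2⟩
  | or _ _ ih₁ ih₂ => exact hw.imp (ih₁ w f) (ih₂ w f)
  | box _ ih =>
    obtain ⟨n, hn⟩ : ∃ n, L = n + 1 := ⟨L - 1, by omega⟩
    have key := sat_iterBox_tree (θ := θ) (k := k) (L := L) (q := q) (R := R) (V := V) w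
      (χ := .or _ (.nvar q)) (Or.inr ?_) (fun v g hv => Or.inl (ih v g (hw v hv))) n f
    · rwa [← hn] at key
    · rintro ⟨w', n, g, heq, _⟩
      cases heq
  | @dia ψ χ i hi hik hθ _ ih =>
    obtain ⟨n, hn⟩ : ∃ n, L = n + 1 := ⟨L - 1, by omega⟩
    have key := sat_dseq_tree (θ := θ) (k := k) (L := L) (q := q) (R := R) (V := V) w
      (χ := .and χ (.var q)) i ?_ n f (fun m h1 h2 => by omega)
    · rwa [← hn] at key
    · intro g hg
      obtain ⟨v, hv, hsat⟩ := hw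
      have hex : ∃ v, Witness θ k L R V w g v := ⟨v, i, ψ, hi, hik, hg, hθ, hv, hsat⟩
      rw [leaf, dif_pos hex]
      -- The chosen witness serves some `θ i'` with the same code, so `i' = i`.
      obtain ⟨i', ψ', hi', hik', hg', hθ', -, hsat'⟩ := hex.choose_spec
      obtain rfl : i' = i := index_eq_of_code hkL hi' hik' hi hik
        fun m hm => (hg' m hm).symm.trans (hg m hm)
      obtain rfl : ψ' = ψ := by
        rw [hθ] at hθ'
        cases hθ'
        rfl
      exact ⟨ih _ g hsat', _, L, g, rfl, Or.inl ⟨rfl, rfl⟩⟩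

/-! ### Subformulas and the equivalence -/

theorem self_mem_subf {I P : Type} (ψ : MF I P) : ψ ∈ Subf ψ := by
  cases ψ <;> simp [Subf]

theorem subf_trans {I P : Type} {χ ψ φ : MF I P} (h₁ : χ ∈ Subf ψ) (h₂ : ψ ∈ Subf φ) :
    χ ∈ Subf φ := by
  induction φ with
  | var | nvar | bot | top => cases h₂; exact h₁
  | and a b iha ihb | or a b iha ihb =>
    rcases h₂ with (h | h) | h
    · cases h; exact h₁
    · exact Or.inl (Or.inr (iha h))
    · exact Or.inr (ihb h)
  | box i a ih | dia i a ih =>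
    rcases h₂ with h | h
    · cases h; exact h₁
    · exact Or.inr (ih h)

theorem fvars_subset_of_subf {I P : Type} {ψ φ : MF I P} (h : ψ ∈ Subf φ) :
    fvars ψ ⊆ fvars φ := by
  induction φ with
  | var | nvar | bot | top => cases h; exact subset_rfl
  | and a b iha ihb | or a b iha ihb =>
    rcases h with (h | h) | h
    · cases h; exact subset_rfl
    · exact (iha h).trans Set.subset_union_left
    · exact (ihb h).trans Set.subset_union_right
  | box i a ih | dia i a ih =>
    rcases h with h | h
    · cases h; exact subset_rfl
    · exact ih h

/-- the translation `φ ↦ φ^tr = tr k ∧ q` from unimodal formulas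
(with subformula enumeration `θ 1, …, θ k` in non-decreasing order of size,
`θ k = φ`, `L = ⌈log₂ k⌉`, `q` fresh) yields a diamond-free trimodal formula
such that `φ` is K-satisfiable iff `φ^tr` is D2⊕⊆K-satisfiable. -/
theorem stmt_4 (φ : MF Unit ℕ) (k : ℕ) (hk : 2 ≤ k)
    (θ : ℕ → MF Unit ℕ) (tr : ℕ → MF (Fin 3) ℕ) (q : ℕ) (L : ℕ)
    (hq : q ∉ fvars φ)
    (hL : L = Nat.clog 2 k)
    (hθk : θ k = φ)
    (hrange : ∀ ψ, ψ ∈ Subf φ ↔ ∃ i, 1 ≤ i ∧ i ≤ k ∧ θ i = ψ)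
    (hinj : ∀ i j, 1 ≤ i → i ≤ k → 1 ≤ j → j ≤ k → θ i = θ j → i = j)
    (hord : ∀ i j, 1 ≤ i → i ≤ k → 1 ≤ j → j ≤ k → i ≤ j →
      fsize (θ i) ≤ fsize (θ j))
    (htr : ∀ i, 1 ≤ i → i ≤ k →
      (∀ p, θ i = .var p → tr i = .var p) ∧
      (∀ p, θ i = .nvar p → tr i = .nvar p) ∧
      (θ i = .bot → tr i = .bot) ∧
      (θ i = .top → tr i = .top) ∧
      (∀ j l, 1 ≤ j → j ≤ k → 1 ≤ l → l ≤ k →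
        θ i = .and (θ j) (θ l) → tr i = .and (tr j) (tr l)) ∧
      (∀ j l, 1 ≤ j → j ≤ k → 1 ≤ l → l ≤ k →
        θ i = .or (θ j) (θ l) → tr i = .or (tr j) (tr l)) ∧
      (∀ j, 1 ≤ j → j ≤ k →
        θ i = .box () (θ j) → tr i = iterBox 2 L (.or (tr j) (.nvar q))) ∧
      (∀ j, 1 ≤ j → j ≤ k →
        θ i = .dia () (θ j) → tr i = dseq i L (.and (tr j) (.var q)))) :
    DiamondFree (MF.and (tr k) (.var q)) ∧
    (KSat φ ↔ D2KSat (MF.and (tr k) (.var q))) := by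
  have hT : ∀ ψ i, 1 ≤ i → i ≤ k → θ i = ψ → IsTr θ k L q ψ (tr i) := by
    have hsub : ∀ i, 1 ≤ i → i ≤ k → ∀ χ ∈ Subf (θ i), ∃ j, 1 ≤ j ∧ j ≤ k ∧ θ j = χ :=
      fun i hi hik χ hχ => (hrange χ).1 (subf_trans hχ ((hrange _).2 ⟨i, hi, hik, rfl⟩))
    have hfresh : ∀ i, 1 ≤ i → i ≤ k → q ∉ fvars (θ i) :=
      fun i hi hik h => hq (fvars_subset_of_subf ((hrange _).2 ⟨i, hi, hik, rfl⟩) h)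
    intro ψ
    induction ψ with
    | var p =>
      intro i hi hik h
      rw [(htr i hi hik).1 p h]
      refine .var p fun hp => hfresh i hi hik ?_
      rw [h, hp]; rfl
    | nvar p =>
      intro i hi hik h
      rw [(htr i hi hik).2.1 p h]
      refine .nvar p fun hp => hfresh i hi hik ?_
      rw [h, hp]; rfl
    | bot =>
      intro i hi hik h
      rw [(htr i hi hik).2.2.1 h]
      exact .bot
    | top =>
      intro i hi hik h
      rw [(htr i hi hik).2.2.2.1 h]
      exact .top
    | and a b iha ihb =>
      intro i hi hik h
      obtain ⟨j, hj, hjk, rfl⟩ := hsub i hi hik a (by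
        rw [h]; exact Or.inl (Or.inr (self_mem_subf a)))
      obtain ⟨l, hl, hlk, rfl⟩ := hsub i hi hik b (by rw [h]; exact Or.inr (self_mem_subf b))
      rw [(htr i hi hik).2.2.2.2.1 j l hj hjk hl hlk h]
      exact .and (iha j hj hjk rfl) (ihb l hl hlk rfl)
    | or a b iha ihb =>
      intro i hi hik h
      obtain ⟨j, hj, hjk, rfl⟩ := hsub i hi hik a (by
        rw [h]; exact Or.inl (Or.inr (self_mem_subf a)))
      obtain ⟨l, hl, hlk, rfl⟩ := hsub i hi hik b (by rw [h]; exact Or.inr (self_mem_subf b))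
      rw [(htr i hi hik).2.2.2.2.2.1 j l hj hjk hl hlk h]
      exact .or (iha j hj hjk rfl) (ihb l hl hlk rfl)
    | box u a ih =>
      intro i hi hik h
      obtain ⟨j, hj, hjk, rfl⟩ := hsub i hi hik a (by rw [h]; exact Or.inr (self_mem_subf a))
      rw [(htr i hi hik).2.2.2.2.2.2.1 j hj hjk h]
      exact .box (ih j hj hjk rfl)
    | dia u a ih =>
      intro i hi hik h
      obtain ⟨j, hj, hjk, rfl⟩ := hsub i hi hik a (by rw [h]; exact Or.inr (self_mem_subf a))
      rw [(htr i hi hik).2.2.2.2.2.2.2 j hj hjk h]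
      exact .dia i hi hik h (ih j hj hjk rfl)
  have hφ : IsTr θ k L q φ (tr k) := hT φ k (by omega) le_rfl hθk
  have hL1 : 1 ≤ L := hL ▸ Nat.clog_pos (by norm_num) hk
  have hkL : k ≤ 2 ^ L := hL ▸ Nat.le_pow_clog (by norm_num) k
  refine ⟨⟨hφ.diamondFree, trivial⟩, ?_, ?_⟩
  · rintro ⟨W, R, V, w, hw⟩
    refine ⟨UWorld W, URel θ k L R V, UVal L q V, some (w, L, fun _ => false), ?_, ?_, ?_,
      hφ.sat_forth hL1 hkL w _ hw, w, L, _, rfl, Or.inl ⟨rfl, rfl⟩⟩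
    · exact fun a => ⟨_, Or.inl ⟨by decide, rfl⟩⟩
    · exact fun a => ⟨_, Or.inr ⟨by decide, rfl⟩⟩
    · rintro a b ((⟨_, h⟩ | ⟨_, h⟩) | (⟨_, h⟩ | ⟨_, h⟩))
      · exact Or.inl ⟨by decide, h⟩
      · exact Or.inr ⟨by decide, h⟩
      · exact Or.inl ⟨by decide, h⟩
      · exact Or.inr ⟨by decide, h⟩
  · rintro ⟨W, R, V, w, h0, h1, hsub, hw⟩
    exact ⟨W, _, V, w, hφ.sat_back h0 h1 hsub w hw.1⟩
end

section
/- A diamond-free trimodal formula φ in negation normal form is D2⊕⊆KF-satisfiable if and only if there is a valuation V on the full infinite binary tree such that M, ε ⊨ φ, where M = ({0,1}*, R_1, R_2, R_3, V), ε is the root (empty word), R_1 = {(σ, σ0) : σ ∈ {0,1}*} is the left-child relation, R_2 = {(σ, σ1) : σ ∈ {0,1}*} is the right-child relation, and R_3 is the transitive closure of R_1 ∪ R_2. -/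
/-- `D2⊕⊆KF`-satisfiability: `R 0`, `R 1` serial, `R 0 ∪ R 1 ⊆ R 2`, `R 2` transitive. -/
def D2KFSat (φ : MF (Fin 3) ℕ) : Prop :=
  ∃ (W : Type) (R : Fin 3 → W → W → Prop) (V : ℕ → Set W) (w : W),
    Serial (R 0) ∧ Serial (R 1) ∧
    (∀ a b, R 0 a b ∨ R 1 a b → R 2 a b) ∧
    Transitive (R 2) ∧
    Sat R V w φ

/-- The left-child relation on `{0,1}*`. -/
def leftR (σ τ : List Bool) : Prop := τ = σ ++ [false]

/-- The right-child relation on `{0,1}*`. -/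
def rightR (σ τ : List Bool) : Prop := τ = σ ++ [true]

/-- The accessibility relations of the full infinite binary tree: left child,
right child, and the transitive closure of their union. -/
def treeR : Fin 3 → List Bool → List Bool → Prop :=
  ![leftR, rightR, Relation.TransGen (fun σ τ => leftR σ τ ∨ rightR σ τ)]

theorem sat_pullback {I P W W' : Type} {R : I → W → W → Prop} {R' : I → W' → W' → Prop}
    (V : P → Set W) (f : W' → W) (hf : ∀ i a b, R' i a b → R i (f a) (f b))
    (φ : MF I P) (hdf : DiamondFree φ) (a : W') (h : Sat R V (f a) φ) :
    Sat R' (fun p => f ⁻¹' V p) a φ := by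
  induction φ generalizing a with
  | var p => exact h
  | nvar p => exact h
  | bot => exact h
  | top => trivial
  | and φ ψ ih₁ ih₂ => exact ⟨ih₁ hdf.1 a h.1, ih₂ hdf.2 a h.2⟩
  | or φ ψ ih₁ ih₂ => exact h.imp (ih₁ hdf.1 a) (ih₂ hdf.2 a)
  | box i φ ih => exact fun b hab => ih hdf b (h _ (hf i a b hab))
  | dia i φ => exact hdf.elim

/-- A diamond-free trimodal NNF formula is D2⊕⊆KF-satisfiable iff
it is satisfied at the root of the full infinite binary tree under some valuation. -/
theorem stmt_5 (φ : MF (Fin 3) ℕ) (hdf : DiamondFree φ) :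
    D2KFSat φ ↔ ∃ V : ℕ → Set (List Bool), Sat treeR V [] φ := by
  constructor
  · rintro ⟨W, R, V, w, h0, h1, hsub, htr, hsat⟩
    choose l hl using h0
    choose r hr using h1
    -- The world reached from `w` by reading a word left to right, taking `l` on `0` and `r` on `1`.
    let f : List Bool → W := List.foldl (fun u b => bif b then r u else l u) w
    have hleft : ∀ σ τ, leftR σ τ → R 0 (f σ) (f τ) := by
      rintro σ _ rfl
      simpa [f] using hl _
    have hright : ∀ σ τ, rightR σ τ → R 1 (f σ) (f τ) := by
      rintro σ _ rfl
      simpa [f] using hr _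
    have hstep : ∀ σ τ, leftR σ τ ∨ rightR σ τ → R 2 (f σ) (f τ) :=
      fun σ τ h => hsub _ _ (h.imp (hleft σ τ) (hright σ τ))
    have htrans : ∀ σ τ, Relation.TransGen (fun σ τ => leftR σ τ ∨ rightR σ τ) σ τ →
        R 2 (f σ) (f τ) := by
      intro σ τ h
      induction h with
      | single h => exact hstep _ _ h
      | tail _ h ih => exact htr ih (hstep _ _ h)
    refine ⟨_, sat_pullback V f ?_ φ hdf [] hsat⟩
    intro i
    fin_cases i
    · exact hleft
    · exact hright
    · exact htrans
  · rintro ⟨V, hV⟩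
    exact ⟨List Bool, treeR, V, [], fun σ => ⟨σ ++ [false], rfl⟩, fun σ => ⟨σ ++ [true], rfl⟩,
      fun _ _ h => Relation.TransGen.single h,
      fun _ _ _ h₁ h₂ => Relation.TransGen.trans h₁ h₂, hV⟩
end

section
/- For a diamond-free bimodal formula φ in negation normal form (with modalities □_1, □_2), let t(φ) be the trimodal formula obtained by recursively replacing every occurrence of □_1 ψ by □_1□_2 t(ψ) and every occurrence of □_2 ψ by □_1□_3□_2 t(ψ) (and leaving literals, ⊥, ⊤, ∧, ∨ unchanged). Then φ is D⊕⊆KF-satisfiable if and only if t(φ) is DF2⊕⊆KF-satisfiable. -/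
/-- The translation `t` from bimodal to trimodal formulas:
`□_1 ψ ↦ □_1□_2 t(ψ)` and `□_2 ψ ↦ □_1□_3□_2 t(ψ)`
(modalities `1, 2, 3` are the indices `0, 1, 2` of `Fin 3`). -/
def t10 : MF (Fin 2) ℕ → MF (Fin 3) ℕ
  | .var p  => .var p
  | .nvar p => .nvar p
  | .bot    => .bot
  | .top    => .top
  | .and φ ψ => .and (t10 φ) (t10 ψ)
  | .or φ ψ  => .or (t10 φ) (t10 ψ)
  | .box i ψ =>
      if i = 0 then .box 0 (.box 1 (t10 ψ))
      else .box 0 (.box 2 (.box 1 (t10 ψ)))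
  | .dia i ψ =>
      if i = 0 then .dia 0 (.dia 1 (t10 ψ))
      else .dia 0 (.dia 2 (.dia 1 (t10 ψ)))

/-- `D⊕⊆KF`-satisfiability: `R 0` serial, `R 0 ⊆ R 1`, `R 1` transitive. -/
def DKFSat (φ : MF (Fin 2) ℕ) : Prop :=
  ∃ (W : Type) (R : Fin 2 → W → W → Prop) (V : ℕ → Set W) (w : W),
    Serial (R 0) ∧ (∀ a b, R 0 a b → R 1 a b) ∧ Transitive (R 1) ∧
    Sat R V w φ

/-- `DF2⊕⊆KF`-satisfiability: `R 0`, `R 1` serial and transitive,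
`R 0 ∪ R 1 ⊆ R 2`, `R 2` transitive. -/
def DF2KFSat (φ : MF (Fin 3) ℕ) : Prop :=
  ∃ (W : Type) (R : Fin 3 → W → W → Prop) (V : ℕ → Set W) (w : W),
    Serial (R 0) ∧ Transitive (R 0) ∧ Serial (R 1) ∧ Transitive (R 1) ∧
    (∀ a b, R 0 a b ∨ R 1 a b → R 2 a b) ∧ Transitive (R 2) ∧
    Sat R V w φ

/-- The trimodal frame on two copies of each bimodal world; the flag is `false` on main
copies and `true` on intermediate ones. -/
def splitRel {W : Type} (R : Fin 2 → W → W → Prop) : Fin 3 → W × Bool → W × Bool → Prop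
  | 0, a, b => a.1 = b.1 ∧ b.2 = true
  | 1, a, b => b.2 = false ∧ ((a.2 = true ∧ R 0 a.1 b.1) ∨ (a.2 = false ∧ a.1 = b.1))
  | 2, a, b => R 1 a.1 b.1 ∨ (a.1 = b.1 ∧ (a.2 = true → b.2 = true))

/-- The bimodal frame `(R₁;R₁;R₂, R₁;R₃;R₂)` on the worlds of a trimodal frame. -/
def composedRel {W : Type} (R : Fin 3 → W → W → Prop) : Fin 2 → W → W → Prop
  | 0, a, d => ∃ b c, R 0 a b ∧ R 0 b c ∧ R 1 c d
  | 1, a, d => ∃ b c, R 0 a b ∧ R 2 b c ∧ R 1 c d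

/-- Truth of a diamond-free formula passes to the translation at main copies. -/
lemma sat_splitRel {W : Type} {R : Fin 2 → W → W → Prop} {V : ℕ → Set W}
    (hsub : ∀ a b, R 0 a b → R 1 a b) (htr : Transitive (R 1)) :
    ∀ (φ : MF (Fin 2) ℕ), DiamondFree φ → ∀ w, Sat R V w φ →
      Sat (splitRel R) (fun p => {x | x.1 ∈ V p}) (w, false) (t10 φ) := by
  intro φ
  induction φ with
  | var p => exact fun _ w h => h
  | nvar p => exact fun _ w h => h
  | bot => exact fun _ w h => h
  | top => exact fun _ w h => h
  | and φ ψ ih₁ ih₂ => exact fun hd w h => ⟨ih₁ hd.1 w h.1, ih₂ hd.2 w h.2⟩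
  | or φ ψ ih₁ ih₂ => exact fun hd w h => h.imp (ih₁ hd.1 w) (ih₂ hd.2 w)
  | dia i φ ih => exact fun hd => hd.elim
  | box i φ ih =>
    intro hd w h
    fin_cases i
    · rintro ⟨u, i⟩ ⟨rfl, hi⟩ ⟨v, j⟩ ⟨hj, hv⟩
      simp only at hi hj hv
      subst hi hj
      rcases hv with ⟨-, hv⟩ | ⟨hf, -⟩
      · exact ih hd v (h v hv)
      · cases hf
    · rintro ⟨u, i⟩ ⟨rfl, hi⟩ ⟨v, j⟩ hv ⟨x, k⟩ ⟨hk, hx⟩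
      simp only at hi hk hv hx
      subst hi hk
      refine ih hd x (h x ?_)
      rcases hv with hv | ⟨hv, hj⟩
      · rcases hx with ⟨-, hx⟩ | ⟨-, hx⟩
        · exact htr hv (hsub _ _ hx)
        · exact hx ▸ hv
      · simp only at hv hj
        subst hv
        rcases hx with ⟨-, hx⟩ | ⟨hf, -⟩
        · exact hsub _ _ hx
        · simp [hf] at hj

/-- Truth of a translated diamond-free formula reflects to the composed frame. -/
lemma sat_composedRel {W : Type} {R : Fin 3 → W → W → Prop} {V : ℕ → Set W}
    (htr : Transitive (R 0)) :
    ∀ (φ : MF (Fin 2) ℕ), DiamondFree φ → ∀ w, Sat R V w (t10 φ) →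
      Sat (composedRel R) V w φ := by
  intro φ
  induction φ with
  | var p => exact fun _ w h => h
  | nvar p => exact fun _ w h => h
  | bot => exact fun _ w h => h
  | top => exact fun _ w h => h
  | and φ ψ ih₁ ih₂ => exact fun hd w h => ⟨ih₁ hd.1 w h.1, ih₂ hd.2 w h.2⟩
  | or φ ψ ih₁ ih₂ => exact fun hd w h => h.imp (ih₁ hd.1 w) (ih₂ hd.2 w)
  | dia i φ ih => exact fun hd => hd.elim
  | box i φ ih =>
    intro hd w h
    fin_cases i
    · rintro d ⟨b, c, hb, hc, hcd⟩
      exact ih hd d (h c (htr hb hc) d hcd)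
    · rintro d ⟨b, c, hb, hc, hcd⟩
      exact ih hd d (h b hb c hc d hcd)

/-- A diamond-free bimodal NNF formula `φ` is D⊕⊆KF-satisfiable
iff `t(φ)` is DF2⊕⊆KF-satisfiable. -/
theorem stmt_10 (φ : MF (Fin 2) ℕ) (hdf : DiamondFree φ) :
    DKFSat φ ↔ DF2KFSat (t10 φ) := by
  constructor
  · rintro ⟨W, R, V, w, hser, hsub, htr, h⟩
    refine ⟨W × Bool, splitRel R, fun p => {x | x.1 ∈ V p}, (w, false), ?_, ?_, ?_, ?_, ?_, ?_,
      sat_splitRel hsub htr φ hdf w h⟩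
    · exact fun a => ⟨(a.1, true), rfl, rfl⟩
    · exact fun a b c hab hbc => ⟨hab.1.trans hbc.1, hbc.2⟩
    · rintro ⟨a, _ | _⟩
      · exact ⟨(a, false), rfl, Or.inr ⟨rfl, rfl⟩⟩
      · obtain ⟨v, hv⟩ := hser a
        exact ⟨(v, false), rfl, Or.inl ⟨rfl, hv⟩⟩
    · rintro ⟨a, i⟩ ⟨b, j⟩ ⟨c, k⟩ ⟨hj, hab⟩ ⟨hk, hbc⟩
      simp only at hj hk hab hbc
      subst hj hk
      rcases hbc with ⟨hf, -⟩ | ⟨-, rfl⟩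
      · cases hf
      · exact ⟨rfl, hab⟩
    · rintro ⟨a, i⟩ ⟨b, j⟩ (⟨hab, hj⟩ | ⟨hj, ⟨hi, hab⟩ | ⟨hi, hab⟩⟩)
      · exact Or.inr ⟨hab, fun _ => hj⟩
      · exact Or.inl (hsub _ _ hab)
      · exact Or.inr ⟨hab, fun hi' => absurd (hi.symm.trans hi') (by decide)⟩
    · rintro ⟨a, i⟩ ⟨b, j⟩ ⟨c, k⟩ (hab | ⟨hab, hij⟩) (hbc | ⟨hbc, hjk⟩)
      · exact Or.inl (htr hab hbc)
      · exact Or.inl (hbc ▸ hab)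
      · exact Or.inl (hab ▸ hbc)
      · exact Or.inr ⟨hab.trans hbc, fun hi => hjk (hij hi)⟩
  · rintro ⟨W, R, V, w, hs0, ht0, hs1, -, hsub, ht2, h⟩
    refine ⟨W, composedRel R, V, w, ?_, ?_, ?_, sat_composedRel ht0 φ hdf w h⟩
    · intro a
      obtain ⟨b, hb⟩ := hs0 a
      obtain ⟨c, hc⟩ := hs0 b
      obtain ⟨d, hd⟩ := hs1 c
      exact ⟨d, b, c, hb, hc, hd⟩
    · rintro a d ⟨b, c, hb, hc, hd⟩
      exact ⟨b, c, hb, hsub _ _ (Or.inl hc), hd⟩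
    · rintro a d g ⟨b, c, hb, hc, hd⟩ ⟨e, f, he, hf, hg⟩
      exact ⟨b, f, hb, ht2 hc (ht2 (hsub _ _ (Or.inr hd)) (ht2 (hsub _ _ (Or.inl he)) hf)), hg⟩
end

section
/- For every trimodal formula φ (possibly containing diamonds), φ is D2⊕⊆DF-satisfiable if and only if the formula ◇_1⊤ ∧ ◇_2⊤ ∧ □_3(◇_1⊤ ∧ ◇_2⊤) ∧ φ is K2⊕⊆KF-satisfiable. -/
/-- `D2⊕⊆DF`-satisfiability: `R 0`, `R 1` serial, `R 0 ∪ R 1 ⊆ R 2`,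
`R 2` serial and transitive. -/
def D2DFSat (φ : MF (Fin 3) ℕ) : Prop :=
  ∃ (W : Type) (R : Fin 3 → W → W → Prop) (V : ℕ → Set W) (w : W),
    Serial (R 0) ∧ Serial (R 1) ∧
    (∀ a b, R 0 a b ∨ R 1 a b → R 2 a b) ∧
    Serial (R 2) ∧ Transitive (R 2) ∧
    Sat R V w φ

/-- `K2⊕⊆KF`-satisfiability: `R 0 ∪ R 1 ⊆ R 2`, `R 2` transitive
(no seriality requirements). -/
def K2KFSat (φ : MF (Fin 3) ℕ) : Prop :=
  ∃ (W : Type) (R : Fin 3 → W → W → Prop) (V : ℕ → Set W) (w : W),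
    (∀ a b, R 0 a b ∨ R 1 a b → R 2 a b) ∧ Transitive (R 2) ∧
    Sat R V w φ

/-- Truth is preserved in the submodel on a set `S` of worlds closed under all the accessibility
relations. -/
theorem sat_restrict {I P W : Type} (R : I → W → W → Prop) (V : P → Set W) (S : W → Prop)
    (hS : ∀ i a b, S a → R i a b → S b) (φ : MF I P) (a : {v // S v}) :
    Sat (fun i (x y : {v // S v}) => R i x.1 y.1) (fun p => {x | x.1 ∈ V p}) a φ ↔
      Sat R V a.1 φ := by
  induction φ generalizing a with
  | var p => exact Iff.rfl
  | nvar p => exact Iff.rfl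
  | bot => exact Iff.rfl
  | top => exact Iff.rfl
  | and φ ψ ih₁ ih₂ => exact and_congr (ih₁ a) (ih₂ a)
  | or φ ψ ih₁ ih₂ => exact or_congr (ih₁ a) (ih₂ a)
  | box i φ ih =>
    exact ⟨fun h v hv => (ih ⟨v, hS i _ _ a.2 hv⟩).1 (h ⟨v, hS i _ _ a.2 hv⟩ hv),
      fun h v hv => (ih v).2 (h v.1 hv)⟩
  | dia i φ ih =>
    exact ⟨fun ⟨v, hv, h⟩ => ⟨v.1, hv, (ih v).1 h⟩,
      fun ⟨v, hv, h⟩ => ⟨⟨v, hS i _ _ a.2 hv⟩, hv, (ih ⟨v, hS i _ _ a.2 hv⟩).2 h⟩⟩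

/-- A trimodal formula `φ` is D2⊕⊆DF-satisfiable iff
`◇_1⊤ ∧ ◇_2⊤ ∧ □_3(◇_1⊤ ∧ ◇_2⊤) ∧ φ` is K2⊕⊆KF-satisfiable. -/
theorem stmt_13 (φ : MF (Fin 3) ℕ) :
    D2DFSat φ ↔
      K2KFSat (.and (.dia 0 .top)
        (.and (.dia 1 .top)
          (.and (.box 2 (.and (.dia 0 .top) (.dia 1 .top))) φ))) := by
  constructor
  · rintro ⟨W, R, V, w, h0, h1, hsub, -, htr, hφ⟩
    have hdia : ∀ i, Serial (R i) → ∀ v, Sat R V v (.dia i .top) := fun i hi v =>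
      (hi v).imp fun _ hu => ⟨hu, trivial⟩
    exact ⟨W, R, V, w, hsub, htr, hdia 0 h0 w, hdia 1 h1 w,
      fun v _ => ⟨hdia 0 h0 v, hdia 1 h1 v⟩, hφ⟩
  · rintro ⟨W, R, V, w, hsub, htr, ⟨u₀, hu₀, -⟩, ⟨u₁, hu₁, -⟩, hbox, hφ⟩
    have hle : ∀ i a b, R i a b → R 2 a b := by
      intro i a b h
      fin_cases i
      · exact hsub a b (Or.inl h)
      · exact hsub a b (Or.inr h)
      · exact h
    let S : W → Prop := fun v => v = w ∨ R 2 w v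
    have hS : ∀ i a b, S a → R i a b → S b := by
      rintro i a b (rfl | ha) h
      · exact Or.inr (hle i _ _ h)
      · exact Or.inr (htr ha (hle i _ _ h))
    have h0 : ∀ a : {v // S v}, ∃ b : {v // S v}, R 0 a.1 b.1 := by
      rintro ⟨a, rfl | ha⟩
      · exact ⟨⟨u₀, Or.inr (hle 0 _ _ hu₀)⟩, hu₀⟩
      · obtain ⟨⟨b, hb, -⟩, -⟩ := hbox a ha
        exact ⟨⟨b, hS 0 a b (Or.inr ha) hb⟩, hb⟩
    have h1 : ∀ a : {v // S v}, ∃ b : {v // S v}, R 1 a.1 b.1 := by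
      rintro ⟨a, rfl | ha⟩
      · exact ⟨⟨u₁, Or.inr (hle 1 _ _ hu₁)⟩, hu₁⟩
      · obtain ⟨-, ⟨b, hb, -⟩⟩ := hbox a ha
        exact ⟨⟨b, hS 1 a b (Or.inr ha) hb⟩, hb⟩
    exact ⟨{v // S v}, fun i x y => R i x.1 y.1, fun p => {x | x.1 ∈ V p}, ⟨w, Or.inl rfl⟩,
      h0, h1, fun a b => hsub a.1 b.1, fun a => (h0 a).imp fun b => hle 0 a.1 b.1,
      fun _ _ _ hab hbc => htr hab hbc, (sat_restrict R V S hS φ ⟨w, Or.inl rfl⟩).2 hφ⟩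
end

section
/- Let (N, ⊂, F) be a multimodal logic specification in which every ⊂-minimal agent i has F(i) ∈ {T, S5}. Then a diamond-free multimodal NNF formula is (N, ⊂, F)-satisfiable if and only if it is satisfiable in an (N, ⊂, F)-model having exactly one world. -/
/-- The base modal logics assigned to agents. -/
inductive ML : Type
  | D | T | DF | S5

/-- The frame condition that each base logic imposes on an accessibility relation. -/
def RelCond {W : Type} : ML → (W → W → Prop) → Prop
  | .D, R  => Serial R
  | .T, R  => Reflexive R
  | .DF, R => Serial R ∧ Transitive R
  | .S5, R => Equivalence R

/-- `(N, ⊂, F)`-satisfiability: satisfiable in a model over a frame in which each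
`R i` satisfies the condition of `F i` and `R j ⊆ R i` whenever `j ⊂ i`. -/
def SpecSat {N : Type} (sub : N → N → Prop) (F : N → ML) (φ : MF N ℕ) : Prop :=
  ∃ (W : Type) (R : N → W → W → Prop) (V : ℕ → Set W) (w : W),
    (∀ i, RelCond (F i) (R i)) ∧
    (∀ j i, sub j i → ∀ a b, R j a b → R i a b) ∧
    Sat R V w φ

/-- Reflexivity propagates upwards from the `⊂`-minimal agents to all agents. -/
theorem refl_of_minimal {N : Type} [Finite N] {sub : N → N → Prop}
    (htrans : Transitive sub) (hirr : Irreflexive sub) {F : N → ML}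
    (hmin : ∀ i, (∀ j, ¬ sub j i) → F i = ML.T ∨ F i = ML.S5)
    {W : Type} {R : N → W → W → Prop} (hR : ∀ i, RelCond (F i) (R i))
    (hsub : ∀ j i, sub j i → ∀ a b, R j a b → R i a b) (i : N) (a : W) : R i a a := by
  have : IsTrans N sub := ⟨fun _ _ _ h₁ h₂ => htrans h₁ h₂⟩
  have : Std.Irrefl sub := ⟨hirr⟩
  have hwf : WellFounded sub := Finite.wellFounded_of_trans_of_irrefl sub
  induction i using hwf.induction with
  | _ i ih =>
    by_cases h : ∃ j, sub j i
    · obtain ⟨j, hj⟩ := h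
      exact hsub j i hj a a (ih j hj)
    · have hRi := hR i
      rcases hmin i (fun j hj => h ⟨j, hj⟩) with hF | hF
      · rw [hF] at hRi
        exact hRi a
      · rw [hF] at hRi
        exact Equivalence.refl hRi a

/-- A diamond-free formula true at `w` in a model with reflexive relations stays true in the
one-point model that keeps only `w` and its valuation. -/
theorem sat_collapse {I P W : Type} {R : I → W → W → Prop} {V : P → Set W}
    (hrefl : ∀ i a, R i a a) (w : W) :
    ∀ φ : MF I P, DiamondFree φ → Sat R V w φ →
      Sat (W := Unit) (fun _ _ _ => True) (fun p => {_u | w ∈ V p}) () φ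
  | .var _, _, h => h
  | .nvar _, _, h => h
  | .bot, _, h => h
  | .top, _, _ => trivial
  | .and φ ψ, hd, h =>
    ⟨sat_collapse hrefl w φ hd.1 h.1, sat_collapse hrefl w ψ hd.2 h.2⟩
  | .or φ ψ, hd, h =>
    Or.imp (sat_collapse hrefl w φ hd.1) (sat_collapse hrefl w ψ hd.2) h
  | .box i φ, hd, h => fun _ _ => sat_collapse hrefl w φ hd (h w (hrefl i w))
  | .dia _ _, hd, _ => hd.elim

theorem relCond_unit (l : ML) : RelCond (W := Unit) l (fun _ _ => True) := by
  cases l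
  · exact fun _ => ⟨(), trivial⟩
  · exact fun _ => trivial
  · exact ⟨fun _ => ⟨(), trivial⟩, fun _ _ _ _ _ => trivial⟩
  · exact ⟨fun _ => trivial, fun _ => trivial, fun _ _ => trivial⟩

/-- If every `⊂`-minimal agent is assigned `T` or `S5`, then a
diamond-free NNF formula is `(N, ⊂, F)`-satisfiable iff it is satisfiable in an
`(N, ⊂, F)`-model with exactly one world. -/
theorem stmt_14 {N : Type} [Fintype N] [Nonempty N]
    (sub : N → N → Prop) (htrans : Transitive sub) (hirr : Irreflexive sub)
    (F : N → ML)
    (hmin : ∀ i, (∀ j, ¬ sub j i) → F i = ML.T ∨ F i = ML.S5)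
    (φ : MF N ℕ) (hdf : DiamondFree φ) :
    SpecSat sub F φ ↔
      ∃ (W : Type) (R : N → W → W → Prop) (V : ℕ → Set W) (w : W),
        (∀ v : W, v = w) ∧
        (∀ i, RelCond (F i) (R i)) ∧
        (∀ j i, sub j i → ∀ a b, R j a b → R i a b) ∧
        Sat R V w φ := by
  constructor
  · rintro ⟨W, R, V, w, hR, hsub, hw⟩
    exact ⟨Unit, fun _ _ _ => True, fun p => {_u | w ∈ V p}, (), fun _ => rfl,
      fun i => relCond_unit (F i), fun _ _ _ _ _ _ => trivial,
      sat_collapse (refl_of_minimal htrans hirr hmin hR hsub) w φ hdf hw⟩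
  · rintro ⟨W, R, V, w, -, hR, hsub, hw⟩
    exact ⟨W, R, V, w, hR, hsub, hw⟩
end

section
/- Let C be the class of frames (W, R_x, R_y, R_i) in which R_x is serial, R_y is serial and transitive, R_x ∪ R_y ⊆ R_i, and R_i is transitive. Define box-sequences □_{(1)} = □_x□_x□_x□_y□_x□_y□_x□_x, □_{(2)} = □_y□_x□_x□_y□_x□_y□_x□_x, and □_{(3)} = □_i□_y□_x□_y□_x□_x, and for a diamond-free trimodal NNF formula φ let φ^{m} be the result of recursively replacing each occurrence of □_k (k = 1, 2, 3) by the sequence □_{(k)}. Then φ is D2⊕⊆KF-satisfiable if and only if φ^{m} is satisfiable in some Kripke model over a frame in C. -/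
/-- Apply a sequence of boxes (leftmost outermost). -/
def boxSeq {I P : Type} (l : List I) (φ : MF I P) : MF I P :=
  l.foldr (fun i ψ => .box i ψ) φ

/-- The translation replacing (with modalities `x, y, i` coded as `0, 1, 2`)
`□_1` by `□_x□_x□_x□_y□_x□_y□_x□_x`, `□_2` by `□_y□_x□_x□_y□_x□_y□_x□_x`, and
`□_3` by `□_i□_y□_x□_y□_x□_x`. -/
def tr17 : MF (Fin 3) ℕ → MF (Fin 3) ℕ
  | .var p  => .var p
  | .nvar p => .nvar p
  | .bot    => .bot
  | .top    => .top
  | .and φ ψ => .and (tr17 φ) (tr17 ψ)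
  | .or φ ψ  => .or (tr17 φ) (tr17 ψ)
  | .box k ψ =>
      if k = 0 then boxSeq [0, 0, 0, 1, 0, 1, 0, 0] (tr17 ψ)
      else if k = 1 then boxSeq [1, 0, 0, 1, 0, 1, 0, 0] (tr17 ψ)
      else boxSeq [2, 1, 0, 1, 0, 0] (tr17 ψ)
  | .dia k ψ => .dia k (tr17 ψ)

/-! ### Composed relations -/

/-- The relation of reaching `b` from `a` along a list of modalities, leftmost step first. -/
def pathRel {I W : Type} (R : I → W → W → Prop) : List I → W → W → Prop
  | [], a, b => a = b
  | i :: l, a, b => ∃ c, R i a c ∧ pathRel R l c b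

lemma sat_boxSeq {I P W : Type} (R : I → W → W → Prop) (V : P → Set W) (l : List I)
    (φ : MF I P) (a : W) :
    Sat R V a (boxSeq l φ) ↔ ∀ b, pathRel R l a b → Sat R V b φ := by
  induction l generalizing a with
  | nil => simp [boxSeq, pathRel]
  | cons i l ih =>
    have h : boxSeq (i :: l) φ = .box i (boxSeq l φ) := rfl
    simp only [h, Sat, ih, pathRel]
    constructor
    · rintro H b ⟨c, hc, hb⟩
      exact H c hc b hb
    · intro H c hc b hb
      exact H b ⟨c, hc, hb⟩

lemma pathRel_serial {I W : Type} (R : I → W → W → Prop) (l : List I)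
    (h : ∀ i ∈ l, Serial (R i)) : Serial (pathRel R l) := by
  induction l with
  | nil => exact fun w => ⟨w, rfl⟩
  | cons i l ih =>
    intro w
    obtain ⟨c, hc⟩ := h i (by simp) w
    obtain ⟨b, hb⟩ := ih (fun j hj => h j (by simp [hj])) c
    exact ⟨b, c, hc, hb⟩

/-- A transitive relation containing all the `R i` absorbs a path on its right. -/
lemma pathRel_absorb {I W : Type} (R : I → W → W → Prop) (S : W → W → Prop)
    (hS : Transitive S) (hR : ∀ i a b, R i a b → S a b) (l : List I) {a b c : W}
    (hab : S a b) (hbc : pathRel R l b c) : S a c := by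
  induction l generalizing b with
  | nil => exact hbc ▸ hab
  | cons i l ih =>
    obtain ⟨d, hd, hdc⟩ := hbc
    exact ih (hS hab (hR i _ _ hd)) hdc

/-- The list of modalities of the box-sequence `□_(k)`. -/
def code (k : Fin 3) : List (Fin 3) :=
  if k = 0 then [0, 0, 0, 1, 0, 1, 0, 0]
  else if k = 1 then [1, 0, 0, 1, 0, 1, 0, 0]
  else [2, 1, 0, 1, 0, 0]

lemma tr17_box (k : Fin 3) (ψ : MF (Fin 3) ℕ) :
    tr17 (.box k ψ) = boxSeq (code k) (tr17 ψ) := by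
  simp only [tr17, code]
  split_ifs <;> rfl

lemma sat_of_sat_tr17 {W : Type} (R : Fin 3 → W → W → Prop) (V : ℕ → Set W)
    (φ : MF (Fin 3) ℕ) (hdf : DiamondFree φ) (w : W) (h : Sat R V w (tr17 φ)) :
    Sat (fun k => pathRel R (code k)) V w φ := by
  induction φ generalizing w with
  | var p => exact h
  | nvar p => exact h
  | bot => exact h
  | top => exact h
  | and φ ψ ih₁ ih₂ => exact ⟨ih₁ hdf.1 w h.1, ih₂ hdf.2 w h.2⟩
  | or φ ψ ih₁ ih₂ => exact h.imp (ih₁ hdf.1 w) (ih₂ hdf.2 w)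
  | box k ψ ih =>
    rw [tr17_box, sat_boxSeq] at h
    exact fun v hv => ih hdf v (h v hv)
  | dia k ψ _ => exact hdf.elim

/-! ### The automaton model -/

/-- A world of the new model: an old world, the first letter read since it was entered (`none` if
there is none, `some true` for `x`, `some false` for `y`), and the number of letters of `yxyxx`
currently matched. -/
abbrev World (W : Type) : Type := W × Option Bool × Fin 5

/-- Enter the successor of `u` selected by the first letter. The value at `none` is arbitrary among
the two: a complete match starts with a letter. -/
def jump {W : Type} (g₁ g₂ : W → W) (u : W) : Option Bool → W
  | some false => g₂ u
  | _ => g₁ u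

/-- Reading the letter `x`; the fifth matched letter completes `yxyxx`. -/
def stepX {W : Type} (g₁ g₂ : W → W) : World W → World W
  | (u, c, 0) => (u, some (c.getD true), 0)
  | (u, c, 1) => (u, some (c.getD true), 2)
  | (u, c, 2) => (u, some (c.getD true), 0)
  | (u, c, 3) => (u, some (c.getD true), 4)
  | (u, c, 4) => (jump g₁ g₂ u c, none, 0)

/-- Reading the letter `y`; repeated letters `y` count as one. -/
def stepY {W : Type} : World W → World W
  | (u, c, 0) => (u, some (c.getD false), 1)
  | (u, c, 1) => (u, some (c.getD false), 1)
  | (u, c, 2) => (u, some (c.getD false), 3)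
  | (u, c, 3) => (u, some (c.getD false), 3)
  -- The longest suffix of `yxyxy` that is a prefix of `yxyxx` is `yxy`.
  | (u, c, 4) => (u, some (c.getD false), 3)

/-- The relations of the new model: the graphs of `stepX` and `stepY`, and the transitive closure
of their union. -/
def newRel {W : Type} (g₁ g₂ : W → W) : Fin 3 → World W → World W → Prop
  | 0, s, t => t = stepX g₁ g₂ s
  | 1, s, t => t = stepY s
  | 2, s, t => Relation.TransGen (fun a b => b = stepX g₁ g₂ a ∨ b = stepY a) s t

lemma stepY_idem {W : Type} (s : World W) : stepY (stepY s) = stepY s := by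
  obtain ⟨u, c, q⟩ := s
  fin_cases q <;> simp [stepY]

/-- The word `yxyxx` is synchronizing: from any state it leads to a fresh copy of a successor. -/
lemma sync {W : Type} (g₁ g₂ : W → W) (s : World W) :
    ∃ c, stepX g₁ g₂ (stepX g₁ g₂ (stepY (stepX g₁ g₂ (stepY s)))) =
      (jump g₁ g₂ s.1 c, none, 0) := by
  obtain ⟨u, c, q⟩ := s
  refine ⟨some (c.getD false), ?_⟩
  fin_cases q <;> simp [stepX, stepY]

lemma jump_rel {W : Type} (R : Fin 3 → W → W → Prop) (g₁ g₂ : W → W)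
    (hg₁ : ∀ u, R 0 u (g₁ u)) (hg₂ : ∀ u, R 1 u (g₂ u))
    (hsub : ∀ a b, R 0 a b ∨ R 1 a b → R 2 a b)
    (u : W) (c : Option Bool) : R 2 u (jump g₁ g₂ u c) := by
  rcases c with _ | _ | _
  · exact hsub _ _ (.inl (hg₁ u))
  · exact hsub _ _ (.inr (hg₂ u))
  · exact hsub _ _ (.inl (hg₁ u))

lemma step_fst {W : Type} (R : Fin 3 → W → W → Prop) (g₁ g₂ : W → W)
    (hg₁ : ∀ u, R 0 u (g₁ u)) (hg₂ : ∀ u, R 1 u (g₂ u))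
    (hsub : ∀ a b, R 0 a b ∨ R 1 a b → R 2 a b)
    {s t : World W} (h : t = stepX g₁ g₂ s ∨ t = stepY s) :
    t.1 = s.1 ∨ R 2 s.1 t.1 := by
  obtain ⟨u, c, q⟩ := s
  have hj := jump_rel R g₁ g₂ hg₁ hg₂ hsub u c
  rcases h with rfl | rfl <;> fin_cases q <;> simp [stepX, stepY, hj]

lemma transGen_fst {W : Type} (R : Fin 3 → W → W → Prop) (g₁ g₂ : W → W)
    (hg₁ : ∀ u, R 0 u (g₁ u)) (hg₂ : ∀ u, R 1 u (g₂ u))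
    (hsub : ∀ a b, R 0 a b ∨ R 1 a b → R 2 a b) (htr : Transitive (R 2))
    {s t : World W} (h : newRel g₁ g₂ 2 s t) : t.1 = s.1 ∨ R 2 s.1 t.1 := by
  change Relation.TransGen _ s t at h
  induction h with
  | single h => exact step_fst R g₁ g₂ hg₁ hg₂ hsub h
  | tail _ h ih =>
    rcases step_fst R g₁ g₂ hg₁ hg₂ hsub h with e | e <;> rcases ih with e₂ | e₂
    · exact .inl (e.trans e₂)
    · exact .inr (e ▸ e₂)
    · exact .inr (e₂ ▸ e)
    · exact .inr (htr e₂ e)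

/-- A composed step in the new model from a fresh copy of `w` leads to a fresh copy of a successor
of `w` in the old model. -/
lemma path_fresh {W : Type} (R : Fin 3 → W → W → Prop) (g₁ g₂ : W → W)
    (hg₁ : ∀ u, R 0 u (g₁ u)) (hg₂ : ∀ u, R 1 u (g₂ u))
    (hsub : ∀ a b, R 0 a b ∨ R 1 a b → R 2 a b) (htr : Transitive (R 2))
    (k : Fin 3) (w : W) (t : World W)
    (h : pathRel (newRel g₁ g₂) (code k) (w, none, 0) t) :
    ∃ v, R k w v ∧ t = (v, none, 0) := by
  fin_cases k
  · obtain ⟨_, rfl, _, rfl, _, rfl, _, rfl, _, rfl, _, rfl, _, rfl, _, rfl, rfl⟩ := h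
    exact ⟨_, hg₁ w, rfl⟩
  · obtain ⟨_, rfl, _, rfl, _, rfl, _, rfl, _, rfl, _, rfl, _, rfl, _, rfl, rfl⟩ := h
    exact ⟨_, hg₂ w, rfl⟩
  · obtain ⟨s, hs, _, rfl, _, rfl, _, rfl, _, rfl, _, rfl, rfl⟩ := h
    obtain ⟨c, hc⟩ := sync g₁ g₂ s
    refine ⟨_, ?_, hc⟩
    have hj := jump_rel R g₁ g₂ hg₁ hg₂ hsub s.1 c
    rcases transGen_fst R g₁ g₂ hg₁ hg₂ hsub htr hs with e | e
    · exact (show s.1 = w from e) ▸ hj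
    · exact htr e hj

lemma sat_tr17_of_sat {W : Type} (R : Fin 3 → W → W → Prop) (g₁ g₂ : W → W)
    (hg₁ : ∀ u, R 0 u (g₁ u)) (hg₂ : ∀ u, R 1 u (g₂ u))
    (hsub : ∀ a b, R 0 a b ∨ R 1 a b → R 2 a b) (htr : Transitive (R 2))
    (V : ℕ → Set W) (φ : MF (Fin 3) ℕ) (hdf : DiamondFree φ) (w : W)
    (h : Sat R V w φ) :
    Sat (newRel g₁ g₂) (fun p => {s | s.1 ∈ V p}) (w, none, 0) (tr17 φ) := by
  induction φ generalizing w with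
  | var p => exact h
  | nvar p => exact h
  | bot => exact h
  | top => exact h
  | and φ ψ ih₁ ih₂ => exact ⟨ih₁ hdf.1 w h.1, ih₂ hdf.2 w h.2⟩
  | or φ ψ ih₁ ih₂ => exact h.imp (ih₁ hdf.1 w) (ih₂ hdf.2 w)
  | box k ψ ih =>
    rw [tr17_box, sat_boxSeq]
    intro t ht
    obtain ⟨v, hv, rfl⟩ := path_fresh R g₁ g₂ hg₁ hg₂ hsub htr k w t ht
    exact ih hdf v (h v hv)
  | dia k ψ _ => exact hdf.elim

/-- A diamond-free trimodal NNF formula `φ` is D2⊕⊆KF-satisfiable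
iff `φ^m` is satisfiable over a frame `(W, R_x, R_y, R_i)` in which `R_x` is
serial, `R_y` is serial and transitive, `R_x ∪ R_y ⊆ R_i`, and `R_i` is
transitive. -/
theorem stmt_17 (φ : MF (Fin 3) ℕ) (hdf : DiamondFree φ) :
    D2KFSat φ ↔
      ∃ (W : Type) (R : Fin 3 → W → W → Prop) (V : ℕ → Set W) (w : W),
        Serial (R 0) ∧ Serial (R 1) ∧ Transitive (R 1) ∧
        (∀ a b, R 0 a b ∨ R 1 a b → R 2 a b) ∧
        Transitive (R 2) ∧
        Sat R V w (tr17 φ) := by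
  constructor
  · rintro ⟨W, R, V, w, h₁, h₂, hsub, htr, h⟩
    choose g₁ hg₁ using h₁
    choose g₂ hg₂ using h₂
    refine ⟨World W, newRel g₁ g₂, fun p => {s | s.1 ∈ V p}, (w, none, 0),
      fun s => ⟨_, rfl⟩, fun s => ⟨_, rfl⟩, ?_, ?_, fun _ _ _ => Relation.TransGen.trans,
      sat_tr17_of_sat R g₁ g₂ hg₁ hg₂ hsub htr V φ hdf w h⟩
    · rintro a _ _ rfl rfl
      exact stepY_idem a
    · exact fun a b hab => Relation.TransGen.single hab
  · rintro ⟨W, R, V, w, hx, hy, -, hsub, htr, h⟩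
    have hR : ∀ i a b, R i a b → R 2 a b := by
      intro i a b hab
      fin_cases i
      · exact hsub a b (.inl hab)
      · exact hsub a b (.inr hab)
      · exact hab
    refine ⟨W, fun k => pathRel R (code k), V, w, ?_, ?_, ?_, ?_,
      sat_of_sat_tr17 R V φ hdf w h⟩
    · apply pathRel_serial
      simp [code, hx, hy]
    · apply pathRel_serial
      simp [code, hx, hy]
    · rintro a b (⟨c, hc, d, hd, e, he, hb⟩ | ⟨c, hc, d, hd, e, he, hb⟩)
      · exact ⟨e, htr (htr (hR _ _ _ hc) (hR _ _ _ hd)) (hR _ _ _ he), hb⟩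
      · exact ⟨e, htr (htr (hR _ _ _ hc) (hR _ _ _ hd)) (hR _ _ _ he), hb⟩
    · rintro a b c ⟨d, had, hdb⟩ ⟨e, hbe, hec⟩
      exact ⟨e, htr (pathRel_absorb R (R 2) htr hR _ had hdb) hbe, hec⟩
end
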